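/- arXiv:2103.02321 — 3 statements merged into one kernel-verified Lean document; each statement's English description precedes it below -/
import Mathlib

section
/- Let u be quasi-definite with SMOP (P_n) and recurrence coefficients (a_n, b_n), let c ∈ ℂ, and let û be quasi-definite with u = (x−c)²û and SMOP (Q_n). Write Q_n = P_n + α_{n,n−1}P_{n−1} + α_{n,n−2}P_{n−2} for n ≥ 2, Q_1 = P_1 + α_{1,0}, Q_0 = P_0, with the convention α_{n,m} = 0 for m < 0. Then the recurrence x Q_n = Q_{n+1} + b̂_n Q_n + â_n Q_{n−1} (Q_{−1} = 0) holds with b̂_n = b_n + α_{n,n−1} − α_{n+1,n} for all n ≥ 0, â_n = (α_{n,n−2}/α_{n−1,n−3})·a_{n−2} for n ≥ 3, â_2 = u_0·û_0·α_{2,0}/(u_0·û_0 − (û_1 − c·û_0)²), and â_1 = (u_0·û_0 − (û_1 − c·û_0)²)/û_0². -/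
open Polynomial

noncomputable section

/-- Apply a linear functional (identified with its moment sequence) to a polynomial:
`⟨u, p⟩ = Σ_k c_k u_k` for `p = Σ_k c_k x^k`. -/
def fapply (u : ℕ → ℂ) (p : Polynomial ℂ) : ℂ := p.sum fun k ck => ck * u k

/-- `P` is the sequence of monic orthogonal polynomials (SMOP) of the functional `u`. -/
def IsSMOP (u : ℕ → ℂ) (P : ℕ → Polynomial ℂ) : Prop :=
  (∀ n, (P n).Monic) ∧ (∀ n, (P n).natDegree = n) ∧
    (∀ n m, n ≠ m → fapply u (P n * P m) = 0) ∧ (∀ n, fapply u (P n * P n) ≠ 0)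

/-- A functional is quasi-definite iff it admits a SMOP. -/
def IsQuasiDefinite (u : ℕ → ℂ) : Prop := ∃ P, IsSMOP u P

/-- Three term recurrence relation `x P_n = P_{n+1} + b_n P_n + a_n P_{n-1}`,
with `P_{-1} = 0`, `P_0 = 1`. -/
def HasTTRR (P : ℕ → Polynomial ℂ) (a b : ℕ → ℂ) : Prop :=
  P 0 = 1 ∧ X * P 0 = P 1 + C (b 0) * P 0 ∧
    ∀ n, 1 ≤ n → X * P n = P (n + 1) + C (b n) * P n + C (a n) * P (n - 1)

/-- Wronskian `W(p,q)(x) = p(x) q'(x) - p'(x) q(x)`. -/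
def Wr (p q : Polynomial ℂ) (x : ℂ) : ℂ :=
  p.eval x * (derivative q).eval x - (derivative p).eval x * q.eval x

/-- The monic Jacobi matrix with diagonal `b`, superdiagonal `1` and subdiagonal
entries `J_{n+1,n} = a_{n+1}`. -/
def jacobi (a b : ℕ → ℂ) (i j : ℕ) : ℂ :=
  if i = j then b i else if j = i + 1 then 1 else if i = j + 1 then a i else 0

/-- Entrywise product of semi-infinite (banded) matrices; the sum has finite support. -/
def mprod (A B : ℕ → ℕ → ℂ) (i j : ℕ) : ℂ := ∑' k, A i k * B k j

/-- `w` is the moment sequence of the inverse functional `u⁻¹`: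
the convolution of the moments of `u` and `w` is `(1,0,0,…)`. -/
def IsInverseMoments (u w : ℕ → ℂ) : Prop :=
  ∀ n, ∑ k ∈ Finset.range (n + 1), u k * w (n - k) = if n = 0 then 1 else 0

/-- Apply a functional `u` to the second (outer) variable `y` of a bivariate polynomial
`D = Σ_k q_k(x) y^k`, giving `Σ_k u_k q_k(x)`. -/
def fapplyY (u : ℕ → ℂ) (D : Polynomial (Polynomial ℂ)) : Polynomial ℂ :=
  D.sum fun k q => u k • q

def Dlt (n : ℕ) (p : Polynomial ℂ) : Prop := ∀ k, n ≤ k → p.coeff k = 0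

def Lf (u : ℕ → ℂ) : Polynomial ℂ →ₗ[ℂ] ℂ :=
  Polynomial.lsum fun k => LinearMap.mulRight ℂ (u k)

lemma Lf_apply (u : ℕ → ℂ) (p : Polynomial ℂ) : fapply u p = Lf u p := by
  simp [fapply, Lf, Polynomial.lsum_apply]

lemma Lf_C_mul (u : ℕ → ℂ) (c : ℂ) (p : Polynomial ℂ) : Lf u (C c * p) = c * Lf u p := by
  rw [← smul_eq_C_mul, map_smul, smul_eq_mul]

lemma Lf_X_pow (u : ℕ → ℂ) (n : ℕ) : Lf u (X ^ n) = u n := by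
  rw [← Lf_apply]; simp [fapply, X_pow_eq_monomial]

lemma Dlt.add {n : ℕ} {p q : Polynomial ℂ} (hp : Dlt n p) (hq : Dlt n q) : Dlt n (p + q) := by
  intro k hk; simp [hp k hk, hq k hk]

lemma Dlt.sub {n : ℕ} {p q : Polynomial ℂ} (hp : Dlt n p) (hq : Dlt n q) : Dlt n (p - q) := by
  intro k hk; simp [hp k hk, hq k hk]

lemma Dlt.smul {n : ℕ} {p : Polynomial ℂ} (c : ℂ) (hp : Dlt n p) : Dlt n (C c * p) := by
  intro k hk; simp [hp k hk]

lemma Dlt.mono {n m : ℕ} {p : Polynomial ℂ} (h : n ≤ m) (hp : Dlt n p) : Dlt m p :=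
  fun k hk => hp k (h.trans hk)

lemma Dlt.X {n : ℕ} {p : Polynomial ℂ} (hp : Dlt n p) : Dlt (n + 1) (X * p) := by
  intro k hk
  obtain ⟨j, rfl⟩ : ∃ j, k = j + 1 := ⟨k - 1, by omega⟩
  rw [coeff_X_mul]; exact hp j (by omega)

lemma Dlt.zero {p : Polynomial ℂ} (hp : Dlt 0 p) : p = 0 := by
  ext k; simpa using hp k (Nat.zero_le _)

section
variable {u : ℕ → ℂ} {P : ℕ → Polynomial ℂ} (hP : IsSMOP u P)

lemma smop_c (hP : IsSMOP u P) (n : ℕ) : (P n).coeff n = 1 := by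
  have h := hP.1 n
  rw [Monic, leadingCoeff, hP.2.1 n] at h; exact h

lemma smop_D (hP : IsSMOP u P) (n : ℕ) : Dlt (n + 1) (P n) := by
  intro k hk
  apply coeff_eq_zero_of_natDegree_lt; rw [hP.2.1 n]; omega

lemma smop_0 (hP : IsSMOP u P) : P 0 = 1 := by
  exact (hP.1 0).natDegree_eq_zero.1 (hP.2.1 0)

lemma smop_dec (hP : IsSMOP u P) {m : ℕ} {p : Polynomial ℂ} (hp : Dlt (m + 1) p) :
    Dlt m (p - C (p.coeff m) * P m) := by
  intro k hk
  rcases hk.eq_or_lt with rfl | hk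
  · simp [smop_c hP]
  · simp [hp k hk, smop_D hP m k hk]

lemma smop_orth (hP : IsSMOP u P) {n : ℕ} (m : ℕ) : ∀ p : Polynomial ℂ, m ≤ n → Dlt m p →
    Lf u (P n * p) = 0 := by
  induction m with
  | zero => intro p _ hp; simp [hp.zero]
  | succ m ih =>
    intro p hm hp
    have h := ih _ (by omega) (smop_dec hP hp)
    have h2 := hP.2.2.1 n m (by omega)
    rw [Lf_apply] at h2
    rw [mul_sub, mul_left_comm, map_sub, Lf_C_mul, h2] at h
    simpa using h

/-- the norms -/
def Kn (u : ℕ → ℂ) (P : ℕ → Polynomial ℂ) (n : ℕ) : ℂ := Lf u (P n * P n)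

lemma smop_K (hP : IsSMOP u P) (n : ℕ) : Kn u P n ≠ 0 := by
  have := hP.2.2.2 n; rwa [Lf_apply] at this

lemma smop_lead (hP : IsSMOP u P) {n : ℕ} {p : Polynomial ℂ} (hp : Dlt (n + 1) p)
    (h1 : p.coeff n = 1) : Lf u (P n * p) = Kn u P n := by
  have h := smop_orth hP n _ le_rfl (smop_dec hP hp)
  rw [h1, C_1, one_mul, mul_sub, map_sub, sub_eq_zero] at h
  exact h

lemma smop_nondeg (hP : IsSMOP u P) (n : ℕ) : ∀ p : Polynomial ℂ, Dlt n p →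
    (∀ k, k < n → Lf u (p * P k) = 0) → p = 0 := by
  induction n with
  | zero => intro p hp _; exact hp.zero
  | succ n ih =>
    intro p hp h
    have h1 := smop_orth hP n _ le_rfl (smop_dec hP hp)
    rw [mul_sub, mul_left_comm, map_sub, Lf_C_mul, mul_comm, h n (by omega), zero_sub,
      neg_eq_zero] at h1
    have h2 : p.coeff n = 0 := (mul_eq_zero.1 h1).resolve_right (smop_K hP n)
    refine ih p ?_ fun k hk => h k (by omega)
    have := smop_dec hP hp
    simpa [h2] using this

/-- Three-term recurrence from coefficient data. -/
lemma smop_ttrr (hP : IsSMOP u P) (n : ℕ) (β γ : ℂ)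
    (hD : Dlt (n + 1) (X * P (n + 1) - P (n + 2) - C β * P (n + 1)))
    (hγ : γ * Kn u P n = Kn u P (n + 1)) :
    X * P (n + 1) = P (n + 2) + C β * P (n + 1) + C γ * P n := by
  have : X * P (n + 1) - P (n + 2) - C β * P (n + 1) - C γ * P n = 0 := by
    refine smop_nondeg hP (n + 1) _ (hD.sub ((smop_D hP n).smul _)) fun k hk => ?_
    have e1 : Lf u (P (n + 2) * P k) = 0 :=
      smop_orth hP (k + 1) _ (by omega) (smop_D hP k)
    have e2 : Lf u (P (n + 1) * P k) = 0 :=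
      smop_orth hP (k + 1) _ (by omega) (smop_D hP k)
    have e3 : Lf u (X * P (n + 1) * P k) = Lf u (C γ * (P n * P k)) := by
      rw [mul_comm X, mul_assoc, Lf_C_mul]
      rcases (Nat.lt_succ_iff.1 hk).eq_or_lt with rfl | hk
      · rw [smop_lead hP (smop_D hP k).X (by rw [coeff_X_mul, smop_c hP]), ← hγ]; rfl
      · rw [smop_orth hP (k + 2) _ (by omega) (smop_D hP k).X,
          smop_orth hP (k + 1) _ (by omega) (smop_D hP k), mul_zero]
    simp only [sub_mul, map_sub, mul_assoc, Lf_C_mul, e1, e2] at e3 ⊢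
    rw [e3]; ring
  linear_combination this

lemma smop_a (hP : IsSMOP u P) {a b : ℕ → ℂ} (h : HasTTRR P a b) (n : ℕ) :
    a (n + 1) * Kn u P n = Kn u P (n + 1) := by
  have h1 := h.2.2 (n + 1) (by omega)
  rw [Nat.add_sub_cancel] at h1
  rw [← smop_lead hP (smop_D hP n).X (by rw [coeff_X_mul, smop_c hP]), ← mul_assoc,
    mul_comm _ X, h1]
  have e1 : Lf u (P (n + 1 + 1) * P n) = 0 :=
    smop_orth hP (n + 1) _ (by omega) (smop_D hP n)
  have e2 : Lf u (P (n + 1) * P n) = 0 :=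
    smop_orth hP (n + 1) _ (by omega) (smop_D hP n)
  simp only [add_mul, map_add, mul_assoc, Lf_C_mul, e1, e2, Kn]
  ring
end

lemma Lf_rel {u uh : ℕ → ℂ} {c : ℂ}
    (hrel : ∀ n, u n = uh (n + 2) - 2 * c * uh (n + 1) + c ^ 2 * uh n) (p : Polynomial ℂ) :
    Lf u p = Lf uh ((X - C c) ^ 2 * p) := by
  induction p using Polynomial.induction_on' with
  | add p q hp hq => rw [mul_add, map_add, map_add, hp, hq]
  | monomial n r =>
    have : (X - C c) ^ 2 * (monomial n r) =
        C r * X ^ (n + 2) - C (2 * c * r) * X ^ (n + 1) + C (c ^ 2 * r) * X ^ n := by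
      rw [← C_mul_X_pow_eq_monomial]; simp only [C_mul, C_pow]
      rw [show (C 2 : Polynomial ℂ) = 2 from rfl]; ring
    rw [this, ← C_mul_X_pow_eq_monomial]
    simp only [map_sub, map_add, Lf_C_mul, Lf_X_pow, hrel n]; ring

lemma D_sq {c : ℂ} {n : ℕ} {p : Polynomial ℂ} (hp : Dlt (n + 1) p) (h1 : p.coeff n = 1) :
    Dlt (n + 3) ((X - C c) ^ 2 * p) ∧ ((X - C c) ^ 2 * p).coeff (n + 2) = 1 := by
  have e : (X - C c) ^ 2 * p = X * (X * p) - C (2 * c) * (X * p) + C (c ^ 2) * p := by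
    simp only [C_mul, C_pow]
    rw [show (C 2 : Polynomial ℂ) = 2 from rfl]; ring
  rw [e]
  refine ⟨(hp.X.X.sub ((hp.X.mono (by omega)).smul _)).add ((hp.mono (by omega)).smul _), ?_⟩
  simp only [coeff_sub, coeff_add, coeff_C_mul, coeff_X_mul, h1, hp (n + 1) le_rfl,
    hp (n + 2) (by omega)]
  ring

/-- three term recurrence coefficients of the SMOP `(Q_n)` of a quadratic
Geronimus transformation `u = (x-c)² û`, in terms of the connection coefficients `α` of
the expansion `Q_n = P_n + α_{n,n-1} P_{n-1} + α_{n,n-2} P_{n-2}`. -/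
theorem stmt_3 (u : ℕ → ℂ) (c : ℂ) (P : ℕ → Polynomial ℂ) (hP : IsSMOP u P)
    (a b : ℕ → ℂ) (hrec : HasTTRR P a b) (ha : ∀ n, 1 ≤ n → a n ≠ 0)
    (uh : ℕ → ℂ)
    (hrel : ∀ n, u n = uh (n + 2) - 2 * c * uh (n + 1) + c ^ 2 * uh n)
    (Q : ℕ → Polynomial ℂ) (hQ : IsSMOP uh Q)
    (α : ℕ → ℕ → ℂ)
    (hQ0 : Q 0 = P 0)
    (hQ1 : Q 1 = P 1 + C (α 1 0) * P 0)
    (hQn : ∀ n, 2 ≤ n → Q n = P n + C (α n (n - 1)) * P (n - 1) + C (α n (n - 2)) * P (n - 2))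
    (bh ah : ℕ → ℂ)
    (hbh0 : bh 0 = b 0 - α 1 0)
    (hbh : ∀ n, 1 ≤ n → bh n = b n + α n (n - 1) - α (n + 1) n)
    (hah1 : ah 1 = (u 0 * uh 0 - (uh 1 - c * uh 0) ^ 2) / (uh 0) ^ 2)
    (hah2 : ah 2 = u 0 * uh 0 * α 2 0 / (u 0 * uh 0 - (uh 1 - c * uh 0) ^ 2))
    (hahn : ∀ n, 3 ≤ n → ah n = α n (n - 2) / α (n - 1) (n - 3) * a (n - 2)) :
    HasTTRR Q ah bh := by
  have hk0 : Kn u P 0 = u 0 := by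
    have := Lf_X_pow u 0
    simpa [Kn, smop_0 hP] using this
  have hkh0 : Kn uh Q 0 = uh 0 := by
    have := Lf_X_pow uh 0
    simpa [Kn, smop_0 hQ] using this
  have huh0 : uh 0 ≠ 0 := hkh0 ▸ smop_K hQ 0
  have hα : ∀ n, α (n + 2) n * Kn u P n = Kn uh Q (n + 2) := by
    intro n
    obtain ⟨d1, d2⟩ := D_sq (c := c) (smop_D hP n) (smop_c hP n)
    rw [← smop_lead hQ d1 d2, mul_left_comm, ← Lf_rel hrel]
    have h := hQn (n + 2) (by omega)
    rw [show n + 2 - 1 = n + 1 from rfl, Nat.add_sub_cancel] at h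
    rw [h]
    have e1 : Lf u (P (n + 2) * P n) = 0 :=
      smop_orth hP (n + 1) _ (by omega) (smop_D hP n)
    have e2 : Lf u (P (n + 1) * P n) = 0 :=
      smop_orth hP (n + 1) _ (by omega) (smop_D hP n)
    simp only [add_mul, map_add, mul_assoc, Lf_C_mul, e1, e2, Kn]
    ring
  have hk1 : Kn uh Q 1 * uh 0 = u 0 * uh 0 - (uh 1 - c * uh 0) ^ 2 := by
    obtain ⟨d, hd⟩ : ∃ d, Q 1 = X + C d :=
      (hQ.1 1).eq_X_add_C (hQ.2.1 1) |> fun h => ⟨_, h⟩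
    have x0 := Lf_X_pow uh 0
    have x1 := Lf_X_pow uh 1
    have x2 := Lf_X_pow uh 2
    have o : Lf uh (Q 1 * 1) = 0 := by
      rw [← smop_0 hQ]; exact smop_orth hQ 1 _ le_rfl (smop_D hQ 0)
    have k : Kn uh Q 1 = Lf uh (C 1 * X ^ 2 + C (2 * d) * X ^ 1 + C (d ^ 2) * X ^ 0) := by
      rw [Kn, hd]; congr 1; simp only [C_mul, C_pow, C_1]
      rw [show (C 2 : Polynomial ℂ) = 2 from rfl]; ring
    rw [hd, show (X + C d) * 1 = C 1 * X ^ 1 + C d * X ^ 0 by simp] at o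
    simp only [map_add, Lf_C_mul, x0, x1, x2] at o k
    rw [k, hrel 0]
    linear_combination (uh 1 + d * uh 0) * o
  have hK : ∀ n, ah (n + 1) * Kn uh Q n = Kn uh Q (n + 1) := by
    intro n
    match n with
    | 0 => rw [hah1, ← hk1, hkh0]; field_simp
    | 1 =>
      rw [hah2, ← hk1, ← hα 0, hk0]
      have := smop_K hQ 1
      field_simp
    | n + 2 =>
      rw [hahn (n + 3) (by omega)]
      have e1 := hα n
      have e2 := hα (n + 1)
      have e3 := smop_a hP hrec n
      have n1 : α (n + 2) n ≠ 0 := by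
        intro h; rw [h, zero_mul] at e1; exact smop_K hQ _ e1.symm
      change α (n + 3) (n + 1) / α (n + 2) n * a (n + 1) * Kn uh Q (n + 2) = Kn uh Q (n + 3)
      rw [← e1, ← e2, ← e3]
      field_simp
  have hr0 := hrec.2.1
  have hr : ∀ n, X * P (n + 1) = P (n + 2) + C (b (n + 1)) * P (n + 1) + C (a (n + 1)) * P n :=
    fun n => hrec.2.2 (n + 1) (by omega)
  have hq : ∀ n, Q (n + 2) = P (n + 2) + C (α (n + 2) (n + 1)) * P (n + 1)
      + C (α (n + 2) n) * P n := fun n => hQn (n + 2) (by omega)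
  refine ⟨smop_0 hQ, ?_, ?_⟩
  · rw [hQ1, hQ0, hbh0, hr0, C_sub]; ring
  · intro n hn
    obtain ⟨n, rfl⟩ : ∃ m, n = m + 1 := ⟨n - 1, by omega⟩
    refine smop_ttrr hQ n _ _ ?_ (hK n)
    rw [hbh _ hn]
    match n with
    | 0 =>
      have e : X * Q (0 + 1) - Q (0 + 2) - C (b (0 + 1) + α (0 + 1) (0 + 1 - 1)
          - α (0 + 1 + 1) (0 + 1)) * Q (0 + 1) =
          C (a 1 + α 1 0 * b 0 - α 2 0 - (b 1 + α 1 0 - α 2 1) * α 1 0) * P 0 := by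
        have h1 := hr 0
        have h2 := hq 0
        simp only [zero_add, Nat.reduceAdd, Nat.sub_self] at h1 h2 ⊢
        rw [h2, hQ1]
        simp only [C_sub, C_add, C_mul]
        linear_combination h1 + C (α 1 0) * hr0
      rw [e]; exact (smop_D hP 0).smul _
    | n + 1 =>
      have e3 := smop_D hP
      have e : X * Q (n + 2) - Q (n + 3) - C (b (n + 2) + α (n + 2) (n + 1)
          - α (n + 3) (n + 2)) * Q (n + 2) =
          C (a (n + 2) + α (n + 2) (n + 1) * b (n + 1) - α (n + 3) (n + 1)
            - (b (n + 2) + α (n + 2) (n + 1) - α (n + 3) (n + 2)) * α (n + 2) (n + 1)) * P (n + 1)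
          + C (α (n + 2) (n + 1) * a (n + 1)
            - (b (n + 2) + α (n + 2) (n + 1) - α (n + 3) (n + 2)) * α (n + 2) n) * P n
          + C (α (n + 2) n) * (X * P n) := by
        have h2 := hq (n + 1)
        change Q (n + 3) = P (n + 3) + C (α (n + 3) (n + 2)) * P (n + 2)
          + C (α (n + 3) (n + 1)) * P (n + 1) at h2
        have h3 := hr (n + 1)
        change X * P (n + 2) = P (n + 3) + C (b (n + 2)) * P (n + 2)
          + C (a (n + 2)) * P (n + 1) at h3
        rw [h2, hq n]
        simp only [C_sub, C_add, C_mul]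
        linear_combination h3 + C (α (n + 2) (n + 1)) * hr n
      change Dlt (n + 2) (X * Q (n + 2) - Q (n + 3) - C (b (n + 2) + α (n + 2) (n + 1)
          - α (n + 3) (n + 2)) * Q (n + 2))
      rw [e]
      exact (((e3 (n + 1)).smul _).add (((e3 n).mono (by omega)).smul _)).add ((e3 n).X.smul _)
end
end

section
/- Let u be quasi-definite with SMOP (P_n) and recurrence coefficients (a_n, b_n), and let u^{(1)} be a linear functional whose SMOP is the sequence (P^{(1)}_n) of associated polynomials of the first kind. Then u^{(1)} = −(u^{(1)}_0·u_0/a_1)·x²·u^{-1}; that is, for every n ≥ 0 the moments satisfy u^{(1)}_n = −(u^{(1)}_0·u_0/a_1)·(u^{-1})_{n+2}, where (u^{-1})_k are the moments of the inverse functional of u. -/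
open Polynomial

noncomputable section

theorem fapply_add' (u : ℕ → ℂ) (p q : Polynomial ℂ) :
    fapply u (p + q) = fapply u p + fapply u q := by
  unfold fapply
  exact Polynomial.sum_add_index p q _ (by simp) (by intros; ring)

theorem fapply_C_mul' (u : ℕ → ℂ) (c : ℂ) (p : Polynomial ℂ) :
    fapply u (C c * p) = c * fapply u p := by
  unfold fapply
  rw [← Polynomial.smul_eq_C_mul, Polynomial.sum_smul_index _ _ _ (by simp)]
  simp only [Polynomial.sum, Finset.mul_sum, mul_assoc]

theorem fapply_X_pow' (u : ℕ → ℂ) (n : ℕ) : fapply u (X ^ n) = u n := by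
  unfold fapply
  rw [← Polynomial.monomial_one_right_eq_X_pow, Polynomial.sum_monomial_index _ _ (by simp)]
  simp

theorem mom_rec0 (u : ℕ → ℂ) (P : ℕ → Polynomial ℂ) (a b : ℕ → ℂ) (h : HasTTRR P a b) (n : ℕ) :
    fapply u (X ^ (n+1) * P 0) = fapply u (X ^ n * P 1) + b 0 * fapply u (X ^ n * P 0) := by
  rw [← fapply_C_mul', ← fapply_add']
  congr 1
  have := h.2.1
  linear_combination X ^ n * this

theorem mom_rec (u : ℕ → ℂ) (P : ℕ → Polynomial ℂ) (a b : ℕ → ℂ) (h : HasTTRR P a b) (n k : ℕ) :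
    fapply u (X ^ (n+1) * P (k+1)) = fapply u (X ^ n * P (k+2))
      + b (k+1) * fapply u (X ^ n * P (k+1)) + a (k+1) * fapply u (X ^ n * P k) := by
  rw [← fapply_C_mul', ← fapply_C_mul', ← fapply_add', ← fapply_add']
  congr 1
  have := h.2.2 (k+1) (by omega)
  simp only [Nat.add_sub_cancel] at this
  linear_combination X ^ n * this

theorem mom_zero (u : ℕ → ℂ) (P : ℕ → Polynomial ℂ) (h : IsSMOP u P) (h0 : P 0 = 1) (k : ℕ) :
    fapply u (X ^ 0 * P (k+1)) = 0 := by
  have := h.2.2.1 0 (k+1) (by omega)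
  simpa [h0] using this

theorem mom_P0 (u : ℕ → ℂ) (P : ℕ → Polynomial ℂ) (h0 : P 0 = 1) (n : ℕ) :
    fapply u (X ^ n * P 0) = u n := by
  rw [h0, mul_one, fapply_X_pow']

theorem mom_key (u : ℕ → ℂ) (P : ℕ → Polynomial ℂ) (hP : IsSMOP u P)
    (a b : ℕ → ℂ) (hrec : HasTTRR P a b)
    (P1 : ℕ → Polynomial ℂ)
    (hP1 : HasTTRR P1 (fun n => a (n + 1)) (fun n => b (n + 1)))
    (u1 : ℕ → ℂ) (hu1 : IsSMOP u1 P1) (n : ℕ) : ∀ k,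
    u1 0 * fapply u (X ^ n * P (k+1)) =
      a 1 * ∑ j ∈ Finset.range n, u (n - 1 - j) * fapply u1 (X ^ j * P1 k) := by
  induction n with
  | zero => intro k; rw [mom_zero u P hP hrec.1]; simp
  | succ n ih =>
    intro k
    rw [mom_rec u P a b hrec, Finset.sum_range_succ']
    have e : ∀ j, n + 1 - 1 - (j+1) = n - 1 - j := by intro j; omega
    simp only [e]
    cases k with
    | zero =>
      simp only [mom_rec0 u1 P1 _ _ hP1, mul_add, Finset.sum_add_distrib]
      have h1 := ih 0
      have h2 := ih 1
      rw [mom_P0 u P hrec.1, mom_P0 u1 P1 hP1.1 0]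
      have e2 : ∑ j ∈ Finset.range n, u (n - 1 - j) * (b (0+1) * fapply u1 (X ^ j * P1 0))
        = b 1 * ∑ j ∈ Finset.range n, u (n - 1 - j) * fapply u1 (X ^ j * P1 0) := by
        rw [Finset.mul_sum]; exact Finset.sum_congr rfl fun _ _ => by ring
      rw [e2]
      simp only [zero_add, Nat.add_sub_cancel, Nat.sub_zero, Nat.reduceAdd] at *
      linear_combination h2 + b 1 * h1
    | succ k =>
      simp only [mom_rec u1 P1 _ _ hP1, mul_add, Finset.sum_add_distrib]
      have h1 := ih k
      have h2 := ih (k+1)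
      have h3 := ih (k+2)
      rw [mom_zero u1 P1 hu1 hP1.1]
      have e2 : ∀ (c : ℂ) (i : ℕ), ∑ j ∈ Finset.range n, u (n - 1 - j) * (c * fapply u1 (X ^ j * P1 i))
        = c * ∑ j ∈ Finset.range n, u (n - 1 - j) * fapply u1 (X ^ j * P1 i) := by
        intro c i
        rw [Finset.mul_sum]; exact Finset.sum_congr rfl fun _ _ => by ring
      rw [e2, e2]
      linear_combination h3 + b (k+2) * h2 + a (k+2) * h1

/-- `u^{(1)} = -(u^{(1)}_0 u_0 / a_1) x² u⁻¹` on the level of moments. -/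
theorem stmt_5 (u : ℕ → ℂ) (P : ℕ → Polynomial ℂ) (hP : IsSMOP u P)
    (a b : ℕ → ℂ) (hrec : HasTTRR P a b) (ha : ∀ n, 1 ≤ n → a n ≠ 0)
    (P1 : ℕ → Polynomial ℂ)
    (hP1 : HasTTRR P1 (fun n => a (n + 1)) (fun n => b (n + 1)))
    (u1 : ℕ → ℂ) (hu1 : IsSMOP u1 P1)
    (uinv : ℕ → ℂ) (hinv : IsInverseMoments u uinv) :
    ∀ n, u1 n = -(u1 0 * u 0 / a 1) * uinv (n + 2) := by
  have key : ∀ n, u1 0 * (u (n+1) - b 0 * u n) =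
      a 1 * ∑ j ∈ Finset.range n, u (n - 1 - j) * u1 j := by
    intro n
    have h := mom_key u P hP a b hrec P1 hP1 u1 hu1 n 0
    have h2 := mom_rec0 u P a b hrec n
    simp only [mom_P0 u P hrec.1, mom_P0 u1 P1 hP1.1] at h h2
    rw [← h, h2]; ring
  have hW : PowerSeries.mk u * PowerSeries.mk uinv = 1 := by
    ext n
    rw [PowerSeries.coeff_mul, PowerSeries.coeff_one, ← hinv n,
      Finset.Nat.sum_antidiagonal_eq_sum_range_succ_mk]
    simp
  have hU : PowerSeries.C (u1 0) * (PowerSeries.mk u - PowerSeries.C (u 0)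
      - PowerSeries.C (b 0) * (PowerSeries.mk u * PowerSeries.X)) =
      PowerSeries.C (a 1) * (PowerSeries.mk u1 * PowerSeries.mk u * PowerSeries.X
        * PowerSeries.X) := by
    ext n
    rcases n with _ | n
    · simp
    · rw [PowerSeries.coeff_C_mul, PowerSeries.coeff_C_mul, PowerSeries.coeff_succ_mul_X,
        map_sub, map_sub, PowerSeries.coeff_C_mul, PowerSeries.coeff_succ_mul_X,
        PowerSeries.coeff_mk, PowerSeries.coeff_mk, PowerSeries.coeff_C]
      simp only [Nat.succ_ne_zero, if_false, sub_zero]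
      rw [key n]
      rcases n with _ | n
      · simp
      · rw [PowerSeries.coeff_succ_mul_X, PowerSeries.coeff_mul,
          Finset.Nat.sum_antidiagonal_eq_sum_range_succ_mk]
        congr 1
        refine Finset.sum_congr rfl fun j _ => ?_
        simp [mul_comm]
  have hF : PowerSeries.C (u1 0) * (1 - PowerSeries.C (u 0) * PowerSeries.mk uinv
      - PowerSeries.C (b 0) * PowerSeries.X) =
      PowerSeries.C (a 1) * (PowerSeries.mk u1 * PowerSeries.X * PowerSeries.X) := by
    linear_combination PowerSeries.mk uinv * hU
      + (PowerSeries.C (a 1) * PowerSeries.mk u1 * PowerSeries.X * PowerSeries.X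
        - PowerSeries.C (u1 0) * (1 - PowerSeries.C (b 0) * PowerSeries.X)) * hW
  intro n
  have h := congrArg (PowerSeries.coeff (n+2)) hF
  rw [PowerSeries.coeff_C_mul, PowerSeries.coeff_C_mul, PowerSeries.coeff_succ_mul_X,
    PowerSeries.coeff_succ_mul_X, map_sub, map_sub, PowerSeries.coeff_C_mul,
    PowerSeries.coeff_C_mul, PowerSeries.coeff_mk, PowerSeries.coeff_mk, PowerSeries.coeff_one,
    PowerSeries.coeff_X] at h
  simp at h
  have h1 := ha 1 le_rfl
  field_simp
  linear_combination -h
end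
end

section
/- Let u be quasi-definite with SMOP (P_n) and recurrence coefficients (a_n, b_n); suppose u^{-1} is quasi-definite with SMOP (P^−_n), and assume W(P_n,P_{n−1})(0) ≠ 0 for n ≥ 2 and W(P^−_n,P^−_{n+1})(0) ≠ 0 for n ≥ 0. Let J^{(1)} be the monic Jacobi matrix of the associated polynomials of the first kind (diagonal b_{n+1}, subdiagonal a_{n+2}, superdiagonal 1) and J^− the monic Jacobi matrix of (P^−_n). Define the semi-infinite matrices L (L_{n,n} = 1, L_{n,n−1} = α_{n,n−1} = −W(P_{n+1},P_{n−1})(0)/W(P_n,P_{n−1})(0), L_{n,n−2} = α_{n,n−2} = W(P_{n+1},P_n)(0)/W(P_n,P_{n−1})(0), zero elsewhere) and U (U_{n,n} = β_{n,n} = W(P^−_{n+1},P^−_{n+2})(0)/W(P^−_n,P^−_{n+1})(0), U_{n,n+1} = β_{n,n+1} = −W(P^−_n,P^−_{n+2})(0)/W(P^−_n,P^−_{n+1})(0), U_{n,n+2} = 1, zero elsewhere). Then, entrywise, (J^{(1)})² = U·L and (J^−)² = L·U. -/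
open Polynomial

noncomputable section

/-- Lower matrix: `L_{n,n} = 1`, `L_{n,n-1} = -W(P_{n+1},P_{n-1})(0)/W(P_n,P_{n-1})(0)`,
`L_{n,n-2} = W(P_{n+1},P_n)(0)/W(P_n,P_{n-1})(0)`. -/
def Lmat9 (P : ℕ → Polynomial ℂ) (i j : ℕ) : ℂ :=
  if i = j then 1
    else if i = j + 1 then -(Wr (P (i + 1)) (P (i - 1)) 0) / Wr (P i) (P (i - 1)) 0
      else if i = j + 2 then Wr (P (i + 1)) (P i) 0 / Wr (P i) (P (i - 1)) 0
        else 0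

/-- Upper matrix: `U_{n,n} = W(P⁻_{n+1},P⁻_{n+2})(0)/W(P⁻_n,P⁻_{n+1})(0)`,
`U_{n,n+1} = -W(P⁻_n,P⁻_{n+2})(0)/W(P⁻_n,P⁻_{n+1})(0)`, `U_{n,n+2} = 1`. -/
def Umat9 (Pm : ℕ → Polynomial ℂ) (i j : ℕ) : ℂ :=
  if j = i then Wr (Pm (i + 1)) (Pm (i + 2)) 0 / Wr (Pm i) (Pm (i + 1)) 0
    else if j = i + 1 then -(Wr (Pm i) (Pm (i + 2)) 0) / Wr (Pm i) (Pm (i + 1)) 0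
      else if j = i + 2 then 1 else 0

/-- Linear version of `fapply`. -/
def F9 (u : ℕ → ℂ) : ℂ[X] →ₗ[ℂ] ℂ :=
  Polynomial.lsum fun k => (LinearMap.id : ℂ →ₗ[ℂ] ℂ).smulRight (u k)

lemma F9_eq (u : ℕ → ℂ) (p : ℂ[X]) : fapply u p = F9 u p := by
  simp [fapply, F9, Polynomial.lsum_apply]

lemma F9_mon (u : ℕ → ℂ) (n : ℕ) : F9 u (X ^ n) = u n := by
  rw [← F9_eq, fapply, ← monomial_one_right_eq_X_pow, sum_monomial_index] <;> simp

/-- The difference-quotient operator. -/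
def T9 (u : ℕ → ℂ) : ℂ[X] →ₗ[ℂ] ℂ[X] :=
  Polynomial.lsum fun m => (LinearMap.id : ℂ →ₗ[ℂ] ℂ).smulRight
    (∑ k ∈ Finset.range m, C (u k) * X ^ (m - 1 - k))

lemma T9_mon (u : ℕ → ℂ) (m : ℕ) :
    T9 u (X ^ m) = ∑ k ∈ Finset.range m, C (u k) * X ^ (m - 1 - k) := by
  rw [T9, Polynomial.lsum_apply, ← monomial_one_right_eq_X_pow, sum_monomial_index] <;> simp

lemma ext9 {M : Type*} [AddCommMonoid M] [Module ℂ M] (f g : ℂ[X] →ₗ[ℂ] M)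
    (h : ∀ n, f (X ^ n) = g (X ^ n)) : f = g := by
  apply Polynomial.lhom_ext'
  intro n
  ext
  simpa [monomial_one_right_eq_X_pow] using h n

lemma F9_C (u : ℕ → ℂ) (c : ℂ) (p : ℂ[X]) : F9 u (C c * p) = c * F9 u p := by
  rw [← smul_eq_C_mul, map_smul, smul_eq_mul]

lemma T9_C (u : ℕ → ℂ) (c : ℂ) (p : ℂ[X]) : T9 u (C c * p) = C c * T9 u p := by
  rw [← smul_eq_C_mul, map_smul, smul_eq_C_mul]

lemma T9_X (u : ℕ → ℂ) (p : ℂ[X]) : T9 u (X * p) = X * T9 u p + C (F9 u p) := by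
  have := ext9 ((T9 u).comp (LinearMap.mulLeft ℂ X))
    ((LinearMap.mulLeft ℂ X).comp (T9 u) + (Algebra.linearMap ℂ ℂ[X]).comp (F9 u)) (by
      intro n
      simp only [LinearMap.comp_apply, LinearMap.mulLeft_apply, LinearMap.add_apply,
        Algebra.linearMap_apply, F9_mon, ← pow_succ', T9_mon, Finset.sum_range_succ,
        Polynomial.algebraMap_apply, Algebra.algebraMap_self, RingHom.id_apply]
      rw [Finset.mul_sum]
      congr 1
      · apply Finset.sum_congr rfl
        intro k hk
        have := Finset.mem_range.1 hk
        rw [show n + 1 - 1 - k = (n - 1 - k) + 1 by omega, pow_succ]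
        ring
      · simp)
  have := LinearMap.congr_fun this p
  simpa using this

lemma FT0 (u v : ℕ → ℂ) (h : IsInverseMoments u v) (p : ℂ[X]) :
    F9 v (T9 u p) = (derivative p).eval 0 := by
  have := ext9 ((F9 v).comp (T9 u)) (Polynomial.lcoeff ℂ 1) (by
      intro n
      simp only [LinearMap.comp_apply, T9_mon, map_sum, F9_C, F9_mon, lcoeff_apply, coeff_X_pow]
      cases n with
      | zero => simp
      | succ n =>
        have := h n
        simp only [Nat.add_sub_cancel]
        rw [this]
        simp [eq_comm])
  have := LinearMap.congr_fun this p
  rw [← coeff_zero_eq_eval_zero, coeff_derivative]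
  simpa using this

lemma FT1 (u v : ℕ → ℂ) (h : IsInverseMoments u v) (p : ℂ[X]) :
    F9 v (X * T9 u p) = p.eval 0 - v 0 * F9 u p := by
  have := ext9 ((F9 v).comp ((LinearMap.mulLeft ℂ X).comp (T9 u)))
    (Polynomial.lcoeff ℂ 0 - v 0 • F9 u) (by
      intro n
      simp only [LinearMap.comp_apply, LinearMap.mulLeft_apply, T9_mon, lcoeff_apply,
        coeff_X_pow, Finset.mul_sum, map_sum, LinearMap.sub_apply, LinearMap.smul_apply, F9_mon]
      have h2 := h n
      rw [Finset.sum_range_succ] at h2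
      rw [show (∑ k ∈ Finset.range n, F9 v (X * (C (u k) * X ^ (n - 1 - k))))
        = ∑ k ∈ Finset.range n, u k * v (n - k) from Finset.sum_congr rfl (by
          intro k hk
          have := Finset.mem_range.1 hk
          rw [mul_left_comm, F9_C, ← pow_succ', F9_mon]
          congr 2
          omega)]
      simp only [Nat.sub_self] at h2
      rw [smul_eq_mul]
      simp only [eq_comm (a := 0)]
      linear_combination h2)
  have := LinearMap.congr_fun this p
  rw [← coeff_zero_eq_eval_zero]
  simpa using this

lemma orth9 (u : ℕ → ℂ) (P : ℕ → ℂ[X]) (hP : IsSMOP u P) (a b : ℕ → ℂ) (hr : HasTTRR P a b) :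
    ∀ j n, j < n → F9 u (X ^ j * P n) = 0 := by
  intro j
  induction j with
  | zero =>
    intro n hn
    have := hP.2.2.1 n 0 (by omega)
    rw [hr.1, F9_eq] at this
    simpa using this
  | succ j ih =>
    intro n hn
    rw [pow_succ, mul_assoc, hr.2.2 n (by omega), mul_add, mul_add, mul_left_comm,
      mul_left_comm _ (C (a n)), map_add, map_add, F9_C, F9_C, ih _ (by omega), ih _ (by omega),
      ih _ (by omega)]
    simp

lemma dC9 (c : ℂ) (p : ℂ[X]) (n : ℕ) (h : p.degree < n) : (C c * p).degree < n := by
  rw [← smul_eq_C_mul]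
  exact lt_of_le_of_lt (degree_smul_le _ _) h

lemma dadd9 {p q : ℂ[X]} {n : ℕ} (h : p.degree < n) (h' : q.degree < n) :
    (p + q).degree < n :=
  lt_of_le_of_lt (degree_add_le _ _) (max_lt h h')

lemma orth_of_deg (u : ℕ → ℂ) (f q : ℂ[X]) (n : ℕ) (h : ∀ j, j < n → F9 u (X ^ j * f) = 0)
    (hq : q.degree < n) : F9 u (q * f) = 0 := by
  by_cases h0 : q = 0
  · simp [h0]
  rw [q.as_sum_range' n ((natDegree_lt_iff_degree_lt h0).2 hq), Finset.sum_mul, map_sum]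
  apply Finset.sum_eq_zero
  intro i hi
  rw [← C_mul_X_pow_eq_monomial, mul_assoc, F9_C, h i (Finset.mem_range.1 hi), mul_zero]

lemma uniq9 (u : ℕ → ℂ) (P : ℕ → ℂ[X]) (hP : IsSMOP u P) (a b : ℕ → ℂ) (hr : HasTTRR P a b)
    (D : ℂ[X]) (n : ℕ) (hD : D.degree < n) (h : ∀ j, j < n → F9 u (X ^ j * D) = 0) : D = 0 := by
  by_contra h0
  set d := D.natDegree with hd
  have hdn : d < n := (natDegree_lt_iff_degree_lt h0).2 hD
  have dP : ∀ k, (P k).degree = k := fun k => by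
    rw [degree_eq_natDegree (hP.1 k).ne_zero, hP.2.1 k]
  have h1 : F9 u (P d * D) = 0 := orth_of_deg u D (P d) n h (by rw [dP]; exact_mod_cast hdn)
  have h2 : F9 u ((D - C D.leadingCoeff * P d) * P d) = 0 := by
    apply orth_of_deg u _ _ d (fun j hj => orth9 u P hP a b hr j d hj)
    have hl : (D.leadingCoeff) ≠ 0 := leadingCoeff_ne_zero.2 h0
    have := degree_sub_lt_left (p := D) (q := C D.leadingCoeff * P d) (by
      rw [degree_C_mul hl, dP, degree_eq_natDegree h0]) h0 (by
      rw [leadingCoeff_mul, leadingCoeff_C, (hP.1 d).leadingCoeff, mul_one])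
    rwa [degree_eq_natDegree h0] at this
  rw [sub_mul, map_sub, mul_comm D, h1, mul_assoc, F9_C, ← F9_eq] at h2
  have := hP.2.2.2 d
  have hl : (D.leadingCoeff) ≠ 0 := leadingCoeff_ne_zero.2 h0
  simp_all

/-- Associated polynomials of the first kind. -/
def R9 (a b : ℕ → ℂ) : ℕ → ℂ[X]
  | 0 => 1
  | 1 => X - C (b 1)
  | n + 2 => (X - C (b (n + 2))) * R9 a b (n + 1) - C (a (n + 2)) * R9 a b n

lemma R9_deg (a b : ℕ → ℂ) (n : ℕ) : (R9 a b n).Monic ∧ (R9 a b n).degree = n := by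
  induction n using Nat.strong_induction_on with
  | _ n ih =>
    match n, ih with
    | 0, _ => simp [R9]
    | 1, _ => simp [R9, monic_X_sub_C]
    | n + 2, ih =>
      obtain ⟨m1, d1⟩ := ih (n + 1) (by omega)
      obtain ⟨m0, d0⟩ := ih n (by omega)
      have hm : ((X - C (b (n + 2))) * R9 a b (n + 1)).Monic := (monic_X_sub_C _).mul m1
      have hd : ((X - C (b (n + 2))) * R9 a b (n + 1)).degree = ((n + 2 : ℕ) : WithBot ℕ) := by
        rw [degree_mul, d1, degree_X_sub_C]
        norm_cast
        ring
      have hlt : (C (a (n + 2)) * R9 a b n).degree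
          < ((X - C (b (n + 2))) * R9 a b (n + 1)).degree := by
        rw [hd]
        apply dC9
        rw [d0]
        exact_mod_cast (by omega : n < n + 2)
      have e : R9 a b (n + 2) = (X - C (b (n + 2))) * R9 a b (n + 1) - C (a (n + 2)) * R9 a b n := by
        simp only [R9]
      rw [e]
      exact ⟨hm.sub_of_left hlt, by rw [degree_sub_eq_left_of_degree_lt hlt, hd]⟩

lemma T9_P (u : ℕ → ℂ) (P : ℕ → ℂ[X]) (hP : IsSMOP u P) (a b : ℕ → ℂ) (hr : HasTTRR P a b)
    (n : ℕ) : T9 u (P (n + 1)) = C (u 0) * R9 a b n := by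
  have hF : ∀ n, F9 u (P (n + 1)) = 0 := fun n => by
    simpa using orth9 u P hP a b hr 0 (n + 1) (by omega)
  have hT0 : T9 u 1 = 0 := by simpa using T9_mon u 0
  have hF0 : F9 u 1 = u 0 := by simpa using F9_mon u 0
  have hTP1 : T9 u (P 1) = C (u 0) := by
    have h1 := congrArg (T9 u) hr.2.1
    rw [T9_X, map_add, T9_C, hr.1, hT0, hF0] at h1
    simpa using h1.symm
  have key : ∀ n, T9 u (P (n + 2)) = (X - C (b (n + 1))) * T9 u (P (n + 1))
      - C (a (n + 1)) * T9 u (P n) := by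
    intro n
    have h1 := congrArg (T9 u) (hr.2.2 (n + 1) (by omega))
    rw [T9_X, map_add, map_add, T9_C, T9_C, hF, Nat.add_sub_cancel] at h1
    simp only [C_0] at h1
    linear_combination -h1
  induction n using Nat.strong_induction_on with
  | _ n ih =>
    match n, ih with
    | 0, _ => simp [R9, hTP1]
    | 1, _ =>
      rw [key 0, hr.1, hT0, hTP1]
      simp only [R9]
      ring
    | n + 2, ih =>
      rw [key (n + 1), ih (n + 1) (by omega), ih n (by omega)]
      simp only [R9]
      ring

lemma T9_pow (u : ℕ → ℂ) (p : ℂ[X]) (n : ℕ) (h : ∀ j, j < n → F9 u (X ^ j * p) = 0) :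
    ∀ k, k ≤ n → T9 u (X ^ k * p) = X ^ k * T9 u p := by
  intro k
  induction k with
  | zero => simp
  | succ k ih =>
    intro hk
    rw [pow_succ', mul_assoc, T9_X, ih (by omega), h k (by omega)]
    simp [mul_assoc]

/-- Action of a row-finite matrix on a sequence of polynomials. -/
def Act9 (A : ℕ → ℕ → ℂ) (f g : ℕ → ℂ[X]) : Prop :=
  (∀ i j, i + 3 ≤ j → A i j = 0) ∧
  ∀ i N, i + 3 ≤ N → ∑ j ∈ Finset.range N, C (A i j) * f j = g i

lemma Act9.mul {A : ℕ → ℕ → ℂ} {f g : ℕ → ℂ[X]} (h : Act9 A f g) (q : ℂ[X]) :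
    Act9 A (fun i => q * f i) (fun i => q * g i) := by
  refine ⟨h.1, fun i N hN => ?_⟩
  simp only [← h.2 i N hN, Finset.mul_sum]
  exact Finset.sum_congr rfl fun _ _ => by ring

lemma mprod9 {A B : ℕ → ℕ → ℂ} {f g : ℕ → ℂ[X]} (h : Act9 A f g) (i j : ℕ) :
    mprod A B i j = ∑ k ∈ Finset.range (i + 3), A i k * B k j := by
  apply tsum_eq_sum
  intro k hk
  rw [h.1 i k (by simpa using hk), zero_mul]

lemma mprod9_act {A B : ℕ → ℕ → ℂ} {f g e : ℕ → ℂ[X]} (hA : Act9 A f g) (hB : Act9 B e f)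
    (i N : ℕ) (hN : i + 6 ≤ N) : ∑ j ∈ Finset.range N, C (mprod A B i j) * e j = g i := by
  simp only [mprod9 hA, map_sum, Finset.sum_mul]
  rw [Finset.sum_comm, ← hA.2 i (i + 3) le_rfl]
  apply Finset.sum_congr rfl
  intro k hk
  have := Finset.mem_range.1 hk
  rw [← hB.2 k N (by omega), Finset.mul_sum]
  exact Finset.sum_congr rfl fun _ _ => by rw [C_mul, mul_assoc]

lemma indep9 (f : ℕ → ℂ[X]) (hf : ∀ n, (f n).Monic) (hd : ∀ n, (f n).degree = n) (c : ℕ → ℂ)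
    (N : ℕ) (h : ∑ j ∈ Finset.range N, C (c j) * f j = 0) : ∀ j, j < N → c j = 0 := by
  induction N with
  | zero => intro j hj; omega
  | succ N ih =>
    have hN : c N = 0 := by
      have h1 := congrArg (fun p => p.coeff N) h
      simp only [Finset.sum_range_succ, coeff_add, finsetSum_coeff, coeff_C_mul, coeff_zero] at h1
      rw [Finset.sum_eq_zero, zero_add] at h1
      · have : (f N).coeff N = 1 := by
          have := hf N
          rwa [Monic, leadingCoeff, natDegree_eq_of_degree_eq_some (hd N)] at this
        simpa [this] using h1
      · intro j hj
        rw [coeff_eq_zero_of_degree_lt, mul_zero]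
        rw [hd]
        exact_mod_cast Finset.mem_range.1 hj
    rw [Finset.sum_range_succ, hN] at h
    intro j hj
    rcases Nat.lt_succ_iff_lt_or_eq.1 hj with hj | rfl
    · exact ih (by simpa using h) j hj
    · exact hN

lemma mprod9_eq {A B A' B' : ℕ → ℕ → ℂ} {f f' g e : ℕ → ℂ[X]} (hA : Act9 A f g)
    (hB : Act9 B e f) (hA' : Act9 A' f' g) (hB' : Act9 B' e f')
    (hf : ∀ n, (e n).Monic) (hd : ∀ n, (e n).degree = n) (i j : ℕ) :
    mprod A B i j = mprod A' B' i j := by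
  have h1 := mprod9_act hA hB i (i + j + 6) (by omega)
  have h2 := mprod9_act hA' hB' i (i + j + 6) (by omega)
  have := indep9 e hf hd (fun j => mprod A B i j - mprod A' B' i j) (i + j + 6) (by
    simp only [C_sub, sub_mul, Finset.sum_sub_distrib, h1, h2, sub_self]) j (by omega)
  exact sub_eq_zero.1 this

lemma band9 (g : ℕ → ℂ[X]) (m N : ℕ) (h1 : ∀ j, j < m → g j = 0) (h2 : ∀ j, m + 3 ≤ j → g j = 0)
    (hN : m + 3 ≤ N) : ∑ j ∈ Finset.range N, g j = g m + g (m + 1) + g (m + 2) := by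
  rw [← Finset.sum_subset (s₁ := Finset.range (m + 3)), Finset.sum_range_succ,
    Finset.sum_range_succ, Finset.sum_range_succ, Finset.sum_eq_zero, zero_add]
  · intro j hj
    exact h1 j (Finset.mem_range.1 hj)
  · intro j hj
    simp at *
    omega
  · intro j _ hj
    exact h2 j (by simpa using hj)

lemma actJ (a b : ℕ → ℂ) (f : ℕ → ℂ[X]) (h0 : X * f 0 = f 1 + C (b 0) * f 0)
    (h : ∀ n, X * f (n + 1) = f (n + 2) + C (b (n + 1)) * f (n + 1) + C (a (n + 1)) * f n) :
    Act9 (jacobi a b) f (fun n => X * f n) := by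
  refine ⟨fun i j hj => ?_, fun i N hN => ?_⟩
  · unfold jacobi
    rw [if_neg (by omega), if_neg (by omega), if_neg (by omega)]
  · rcases i with _ | i
    · rw [band9 _ 0 N (by omega) _ (by omega)]
      · simp only [h0]; simp [jacobi]; ring
      · intro j hj
        unfold jacobi
        rw [if_neg (by omega), if_neg (by omega), if_neg (by omega)]; simp
    · rw [band9 _ i N _ _ (by omega)]
      · simp only [h]; simp [jacobi, show i ≠ i + 1 + 1 by omega]; ring
      · intro j hj
        unfold jacobi
        rw [if_neg (by omega), if_neg (by omega), if_neg (by omega)]; simp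
      · intro j hj
        unfold jacobi
        rw [if_neg (by omega), if_neg (by omega), if_neg (by omega)]; simp

lemma actU (Q f g : ℕ → ℂ[X]) (h : ∀ n, g n = f (n + 2)
      + C (-(Wr (Q n) (Q (n + 2)) 0) / Wr (Q n) (Q (n + 1)) 0) * f (n + 1)
      + C (Wr (Q (n + 1)) (Q (n + 2)) 0 / Wr (Q n) (Q (n + 1)) 0) * f n) :
    Act9 (Umat9 Q) f g := by
  refine ⟨fun i j hj => ?_, fun i N hN => ?_⟩
  · unfold Umat9
    rw [if_neg (by omega), if_neg (by omega), if_neg (by omega)]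
  · rw [band9 _ i N _ _ (by omega), h]
    · simp [Umat9, -map_div₀, -map_neg]; ring
    · intro j hj
      unfold Umat9
      rw [if_neg (by omega), if_neg (by omega), if_neg (by omega)]; simp
    · intro j hj
      unfold Umat9
      rw [if_neg (by omega), if_neg (by omega), if_neg (by omega)]; simp

lemma actL (P f g : ℕ → ℂ[X]) (h0 : g 0 = f 0)
    (h1 : g 1 = f 1 + C (-(Wr (P 2) (P 0) 0) / Wr (P 1) (P 0) 0) * f 0)
    (h : ∀ n, g (n + 2) = f (n + 2)
      + C (-(Wr (P (n + 3)) (P (n + 1)) 0) / Wr (P (n + 2)) (P (n + 1)) 0) * f (n + 1)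
      + C (Wr (P (n + 3)) (P (n + 2)) 0 / Wr (P (n + 2)) (P (n + 1)) 0) * f n) :
    Act9 (Lmat9 P) f g := by
  have hz : ∀ i j, (i < j ∨ j + 2 < i) → Lmat9 P i j = 0 := by
    intro i j hj
    unfold Lmat9
    rw [if_neg (by omega), if_neg (by omega), if_neg (by omega)]
  refine ⟨fun i j hj => hz i j (by omega), fun i N hN => ?_⟩
  rcases i with _ | _ | i
  · rw [band9 _ 0 N (by omega) _ (by omega)]
    · simp [h0, Lmat9]
    · intro j hj
      rw [hz _ _ (by omega)]; simp
  · rw [band9 _ 0 N (by omega) _ (by omega)]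
    · simp [h1, Lmat9, -map_div₀, -map_neg]; ring
    · intro j hj
      rw [hz _ _ (by omega)]; simp
  · rw [band9 _ i N _ _ (by omega)]
    · rw [h]; simp [Lmat9, show i + 1 + 1 ≠ i by omega,  -map_div₀, -map_neg]; ring
    · intro j hj
      rw [hz _ _ (by omega)]; simp
    · intro j hj
      rw [hz _ _ (by omega)]; simp

/-- `(J^{(1)})² = U·L` and `(J⁻)² = L·U` entrywise. -/
theorem stmt_9 (u : ℕ → ℂ) (P : ℕ → Polynomial ℂ) (hP : IsSMOP u P)
    (a b : ℕ → ℂ) (hrec : HasTTRR P a b) (ha : ∀ n, 1 ≤ n → a n ≠ 0)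
    (uinv : ℕ → ℂ) (hinv : IsInverseMoments u uinv)
    (Pm : ℕ → Polynomial ℂ) (hPm : IsSMOP uinv Pm)
    (am bm : ℕ → ℂ) (hrecm : HasTTRR Pm am bm)
    (hW : ∀ n, 2 ≤ n → Wr (P n) (P (n - 1)) 0 ≠ 0)
    (hWm : ∀ n, Wr (Pm n) (Pm (n + 1)) 0 ≠ 0) :
    (∀ i j, mprod (jacobi (fun n => a (n + 1)) (fun n => b (n + 1)))
        (jacobi (fun n => a (n + 1)) (fun n => b (n + 1))) i j
      = mprod (Umat9 Pm) (Lmat9 P) i j)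
    ∧ (∀ i j, mprod (jacobi am bm) (jacobi am bm) i j
      = mprod (Lmat9 P) (Umat9 Pm) i j) := by
  obtain ⟨hv⟩ : Nonempty (u 0 * uinv 0 = 1) := ⟨by simpa using hinv 0⟩
  have hu0 : u 0 ≠ 0 := left_ne_zero_of_mul_eq_one hv
  set R := R9 a b with hR
  have hTP : ∀ n, T9 u (P (n + 1)) = C (u 0) * R n := T9_P u P hP a b hrec
  have hPo := orth9 u P hP a b hrec
  have hPmo := orth9 uinv Pm hPm am bm hrecm
  have dPm : ∀ k, (Pm k).degree = k := fun k => by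
    rw [degree_eq_natDegree (hPm.1 k).ne_zero, hPm.2.1 k]
  have R0 : ∀ n, u 0 * F9 uinv (R n) = (derivative (P (n + 1))).eval 0 := fun n => by
    rw [← F9_C, ← hTP, FT0 u uinv hinv]
  have hF : ∀ n, F9 u (P (n + 1)) = 0 := fun n => by simpa using hPo 0 (n + 1) (by omega)
  have R1 : ∀ n, u 0 * F9 uinv (X * R n) = (P (n + 1)).eval 0 := fun n => by
    rw [← F9_C, mul_left_comm, ← hTP, FT1 u uinv hinv, hF]
    simp
  have R2 : ∀ n k, k < n → F9 uinv (X ^ (k + 2) * R n) = 0 := fun n k hk => by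
    have h1 := T9_pow u (P (n + 1)) (n + 1) (fun j hj => hPo j _ hj) (k + 1) (by omega)
    have h2 := FT1 u uinv hinv (X ^ (k + 1) * P (n + 1))
    rw [h1, hPo _ _ (by omega), hTP, ← mul_assoc, ← pow_succ', mul_left_comm, F9_C] at h2
    simpa [hu0] using h2
  have mR : ∀ n, (R n).Monic := fun n => (R9_deg a b n).1
  have dR : ∀ n, (R n).degree = n := fun n => (R9_deg a b n).2
  have dC : ∀ (c : ℂ) (k n : ℕ), k < n → (C c * R k).degree < (n : ℕ) := fun c k n hk => by
    apply dC9
    rw [dR]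
    exact_mod_cast hk
  have dsub : ∀ n, (R n - Pm n).degree < (n : ℕ) := fun n => by
    have := degree_sub_lt_left (p := R n) (q := Pm n) (by rw [dR, dPm]) (mR n).ne_zero
      (by rw [(mR n).leadingCoeff, (hPm.1 n).leadingCoeff])
    rwa [dR] at this
  have hP0' : (derivative (P 1)).eval 0 = 1 := by
    have := hrec.2.1
    rw [hrec.1, mul_one, mul_one] at this
    rw [← sub_eq_iff_eq_add.2 this]
    simp
  have hL : Act9 (Lmat9 P) R Pm := by
    apply actL
    · rw [hrecm.1]; rfl
    · set α := -(Wr (P 2) (P 0) 0) / Wr (P 1) (P 0) 0 with hα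
      have hα' : α = -(derivative (P 2)).eval 0 := by
        rw [hα, Wr, Wr, hrec.1, hP0']
        simp [div_neg]
      symm
      rw [← sub_eq_zero]
      apply uniq9 uinv Pm hPm am bm hrecm _ 1
      · rw [add_sub_right_comm]
        exact dadd9 (dsub 1) (dC _ _ _ (by omega))
      · intro j hj
        have : j = 0 := by omega
        subst this
        apply mul_left_cancel₀ hu0
        have h1 := hPmo 0 1 (by omega)
        rw [pow_zero, one_mul] at *
        rw [map_sub, map_add, F9_C, h1]
        have e1 := R0 1
        have e0 := R0 0
        rw [zero_add, hP0'] at e0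
        rw [hα']
        linear_combination e1 - (derivative (P 2)).eval 0 * e0
    · intro n
      have hw := hW (n + 2) (by omega)
      rw [show n + 2 - 1 = n + 1 by omega] at hw
      set α := -(Wr (P (n + 3)) (P (n + 1)) 0) / Wr (P (n + 2)) (P (n + 1)) 0 with hα
      set β := Wr (P (n + 3)) (P (n + 2)) 0 / Wr (P (n + 2)) (P (n + 1)) 0 with hβ
      have c0 : (P (n + 3)).eval 0 + α * (P (n + 2)).eval 0 + β * (P (n + 1)).eval 0 = 0 := by
        rw [hα, hβ]
        field_simp
        simp only [Wr]
        ring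
      have c1 : (derivative (P (n + 3))).eval 0 + α * (derivative (P (n + 2))).eval 0
          + β * (derivative (P (n + 1))).eval 0 = 0 := by
        rw [hα, hβ]
        field_simp
        simp only [Wr]
        ring
      symm
      rw [← sub_eq_zero]
      apply uniq9 uinv Pm hPm am bm hrecm _ (n + 2)
      · rw [add_sub_right_comm, add_sub_right_comm]
        exact dadd9 (dadd9 (dsub _) (dC _ _ _ (by omega)))
          (dC _ _ _ (by omega))
      · intro j hj
        have h1 := hPmo j (n + 2) (by omega)
        rw [mul_sub, mul_add, mul_add, mul_left_comm, mul_left_comm _ (C β), map_sub, map_add,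
          map_add, F9_C, F9_C, h1, sub_zero]
        match j, hj with
        | 0, _ =>
          apply mul_left_cancel₀ hu0
          rw [pow_zero, one_mul, one_mul, one_mul]
          linear_combination c1 + R0 (n + 2) + α * R0 (n + 1) + β * R0 n
        | 1, _ =>
          apply mul_left_cancel₀ hu0
          rw [pow_one]
          linear_combination c0 + R1 (n + 2) + α * R1 (n + 1) + β * R1 n
        | j + 2, hj =>
          rw [R2 _ _ (by omega), R2 _ _ (by omega), R2 _ _ (by omega)]
          simp
  have hU : Act9 (Umat9 Pm) Pm (fun n => X * (X * R n)) := by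
    apply actU
    intro n
    obtain ⟨β, hβ⟩ : ∃ β, β = (X * (X * R n) - Pm (n + 2)).coeff (n + 1) := ⟨_, rfl⟩
    obtain ⟨γ, hγ⟩ : ∃ γ, γ = (X * (X * R n) - Pm (n + 2) - C β * Pm (n + 1)).coeff n := ⟨_, rfl⟩
    have cP : ∀ n, (Pm n).coeff n = 1 := fun n => by
      have := hPm.1 n
      rwa [Monic, leadingCoeff, hPm.2.1 n] at this
    have cP0 : ∀ n m, n < m → (Pm n).coeff m = 0 := fun n m h => by
      apply coeff_eq_zero_of_degree_lt
      rw [dPm]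
      exact_mod_cast h
    have cR : (R n).coeff n = 1 := by
      have := mR n
      rwa [Monic, leadingCoeff, natDegree_eq_of_degree_eq_some (dR n)] at this
    have hexp : X * (X * R n) - Pm (n + 2) - C β * Pm (n + 1) - C γ * Pm n = 0 := by
      apply uniq9 uinv Pm hPm am bm hrecm _ n
      · rw [degree_lt_iff_coeff_zero]
        intro m hm
        rcases Nat.eq_or_lt_of_le hm with rfl | hm
        · rw [coeff_sub, ← hγ, coeff_C_mul, cP]; simp
        rcases Nat.eq_or_lt_of_le hm with rfl | hm
        · rw [coeff_sub, coeff_sub, ← hβ, coeff_C_mul, cP, coeff_C_mul, cP0 _ _ (by omega)]; simp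
        have e : ∃ k, m = k + 2 := ⟨m - 2, by omega⟩
        obtain ⟨k, rfl⟩ := e
        rw [coeff_sub, coeff_sub, coeff_sub, coeff_C_mul, coeff_C_mul, cP0 n _ (by omega),
          cP0 (n + 1) _ (by omega), coeff_X_mul, coeff_X_mul]
        rcases Nat.eq_or_lt_of_le (by omega : n ≤ k) with rfl | hk
        · rw [cR, cP]; simp
        · rw [cP0 _ _ (by omega), coeff_eq_zero_of_degree_lt]
          · simp
          · rw [dR]
            exact_mod_cast hk
      · intro j hj
        rw [mul_sub, mul_sub, mul_sub, mul_left_comm _ (C β), mul_left_comm _ (C γ), map_sub,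
          map_sub, map_sub, F9_C, F9_C, hPmo _ _ (by omega), hPmo _ _ (by omega),
          hPmo _ _ (by omega), ← mul_assoc, ← mul_assoc, ← pow_succ, ← pow_succ, R2 _ _ hj]
        simp
    have hw := hWm n
    have c0 := congrArg (eval 0) hexp
    have c1 := congrArg (fun p => eval 0 (derivative p)) hexp
    simp at c0 c1
    have hβ' : β = -(Wr (Pm n) (Pm (n + 2)) 0) / Wr (Pm n) (Pm (n + 1)) 0 := by
      rw [eq_div_iff hw]
      simp only [Wr]
      linear_combination (derivative (Pm n)).eval 0 * c0 - (Pm n).eval 0 * c1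
    have hγ' : γ = Wr (Pm (n + 1)) (Pm (n + 2)) 0 / Wr (Pm n) (Pm (n + 1)) 0 := by
      rw [eq_div_iff hw]
      simp only [Wr]
      linear_combination -(derivative (Pm (n + 1))).eval 0 * c0 + (Pm (n + 1)).eval 0 * c1
    rw [← hβ', ← hγ']
    linear_combination hexp
  have hJ1 : Act9 (jacobi (fun n => a (n + 1)) (fun n => b (n + 1))) R (fun n => X * R n) := by
    apply actJ
    · simp [hR, R9]
    · intro n
      simp only [hR, R9]
      ring
  have hJm : Act9 (jacobi am bm) Pm (fun n => X * Pm n) := by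
    apply actJ _ _ _ hrecm.2.1
    intro n
    exact hrecm.2.2 (n + 1) (by omega)
  have hL2 : Act9 (Lmat9 P) (fun n => X * (X * R n)) (fun n => X * (X * Pm n)) :=
    (hL.mul X).mul X
  exact ⟨mprod9_eq (hJ1.mul X) hJ1 hU hL mR dR, mprod9_eq (hJm.mul X) hJm hL2 hU hPm.1 dPm⟩
end
end
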